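/- Let l(x) = ∑ a_i x_i with ∑ a_i² = 1, let m ≥ max_i |a_i|, t ≥ -m, and ε = min(1/2, Pr[l(x) > t]) with x uniform on {-1,1}^n. Then Pr[l(x) ∈ (t, t+2m]] = Θ(ε·min(1, m·√(log(1/ε)))), i.e., there exist universal constants c₁, c₂ > 0 with c₁·ε·min(1, m√(log(1/ε))) ≤ Pr[l(x) ∈ (t, t+2m]] ≤ c₂·ε·min(1, m√(log(1/ε))). -/

import Mathlib

open Finset

noncomputable section
open scoped Classical

/-- The ±1 value associated to a Boolean bit. -/
def sgn1 (b : Bool) : ℝ := if b then 1 else -1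

/-- Probability of an event under the uniform measure on `{-1,1}^n`. -/
def cubePr (n : ℕ) (P : (Fin n → Bool) → Prop) : ℝ :=
  ((univ.filter P).card : ℝ) / 2 ^ n

/-- Expectation of a function under the uniform measure on `{-1,1}^n`. -/
def cubeE (n : ℕ) (f : (Fin n → Bool) → ℝ) : ℝ := (∑ x, f x) / 2 ^ n

/-- The linear form `a · x = ∑ aᵢ xᵢ` on `{-1,1}^n`. -/
def lin (n : ℕ) (a : Fin n → ℝ) (x : Fin n → Bool) : ℝ := ∑ i, a i * sgn1 (x i)

/-- The halfspace `1{a · x > t}` as a 0/1-valued function. -/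
def halfspace (n : ℕ) (a : Fin n → ℝ) (t : ℝ) (x : Fin n → Bool) : ℝ :=
  if t < lin n a x then 1 else 0

/-- The influence of coordinate `i` on `f`: the probability that flipping
coordinate `i` changes the value of `f`. -/
def infl (n : ℕ) (i : Fin n) (f : (Fin n → Bool) → ℝ) : ℝ :=
  cubePr n (fun x => f x ≠ f (Function.update x i (!x i)))

/-- The degree-1 Fourier coefficient `f̂({i}) = E[f(x)·xᵢ]`. -/
def fCoeff (n : ℕ) (f : (Fin n → Bool) → ℝ) (i : Fin n) : ℝ :=
  cubeE n (fun x => f x * sgn1 (x i))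

/-- The degree-1 Fourier weight `W¹(f) = ∑ᵢ f̂({i})²`. -/
def W1 (n : ℕ) (f : (Fin n → Bool) → ℝ) : ℝ := ∑ i, (fCoeff n f i) ^ 2

/-!
Write `l` for the linear form, `T = Pr[l > t]` and `q = √(log (1 / ε))`.

Lower bound. The log-Sobolev inequality, applied to a ramp that climbs from `t` to `t + δ`, shows
that `T` at least halves when `t` increases by `O(1 / q)`. Up to that height there are
`O(1 + 1 / (m q))` consecutive windows of width at least `m`, and by the reflection principle none
of them is much more likely than `(t, t + 2m]`.

Upper bound. Let `f(l)` be a ramp climbing from `t - 2m` to `t + 4m`. Integrating `E[f(l) l]` by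
parts gives at least `Pr[l ∈ (t, t + 2m]]`, while the level-1 inequality, which bounds the
correlation of a function of small mean with a linear form, gives `O(m q) Pr[l > t - 2m]`. When
`m q` is small, `Pr[l > t - 2m] = O(T)`, because flipping a sparse random set of coordinates lifts
`l` by `2m` with probability bounded below. When `m q` is not small, the trivial bound `T` suffices.
-/

lemma sgn1_not (b : Bool) : sgn1 (!b) = -sgn1 b := by
  cases b <;> simp [sgn1]

lemma abs_mul_sgn1 (c : ℝ) (b : Bool) : |c * sgn1 b| = |c| := by
  cases b <;> simp [sgn1]

lemma mul_sgn1_sq (c : ℝ) (b : Bool) : (c * sgn1 b) ^ 2 = c ^ 2 := by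
  cases b <;> simp [sgn1]

section Probability

variable {n : ℕ} {f g : (Fin n → Bool) → ℝ} {P Q R : (Fin n → Bool) → Prop} {c : ℝ}

lemma cubeE_add (f g : (Fin n → Bool) → ℝ) :
    cubeE n (fun x => f x + g x) = cubeE n f + cubeE n g := by
  simp only [cubeE, sum_add_distrib, add_div]

lemma cubeE_const_mul (c : ℝ) (f : (Fin n → Bool) → ℝ) :
    cubeE n (fun x => c * f x) = c * cubeE n f := by
  simp only [cubeE, ← mul_sum, mul_div_assoc]

lemma cubeE_sum {ι : Type*} (s : Finset ι) (f : ι → (Fin n → Bool) → ℝ) :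
    cubeE n (fun x => ∑ i ∈ s, f i x) = ∑ i ∈ s, cubeE n (f i) := by
  simp only [cubeE]
  rw [sum_comm, sum_div]

lemma cubeE_mono (h : ∀ x, f x ≤ g x) : cubeE n f ≤ cubeE n g := by
  unfold cubeE
  gcongr
  exact h _

lemma cubeE_nonneg (h : ∀ x, 0 ≤ f x) : 0 ≤ cubeE n f :=
  div_nonneg (sum_nonneg fun x _ => h x) (by positivity)

lemma cubePr_eq_cubeE_indicator (P : (Fin n → Bool) → Prop) :
    cubePr n P = cubeE n ({x | P x}.indicator 1) := by
  simp [cubePr, cubeE, Set.indicator_apply]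

lemma cubePr_nonneg : 0 ≤ cubePr n P := by
  unfold cubePr
  positivity

lemma mul_cubePr_le_cubeE (hf : ∀ x, 0 ≤ f x) (hP : ∀ x, P x → c ≤ f x) :
    c * cubePr n P ≤ cubeE n f := by
  rw [cubePr_eq_cubeE_indicator, ← cubeE_const_mul]
  refine cubeE_mono fun x => ?_
  by_cases hx : P x
  · simpa [hx] using hP x hx
  · simpa [hx] using hf x

lemma cubeE_le_mul_cubePr (hP : ∀ x, P x → f x ≤ c) (hP' : ∀ x, ¬P x → f x ≤ 0) :
    cubeE n f ≤ c * cubePr n P := by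
  rw [cubePr_eq_cubeE_indicator, ← cubeE_const_mul]
  refine cubeE_mono fun x => ?_
  by_cases hx : P x
  · simpa [hx] using hP x hx
  · simpa [hx] using hP' x hx

lemma cubePr_mono (h : ∀ x, P x → Q x) : cubePr n P ≤ cubePr n Q := by
  unfold cubePr
  gcongr with x
  exact h x

lemma cubePr_le_add (h : ∀ x, P x → Q x ∨ R x) : cubePr n P ≤ cubePr n Q + cubePr n R := by
  have hcard : #{x | P x} ≤ #{x | Q x} + #{x | R x} :=
    (card_le_card fun x => by simpa using h x).trans (card_union_le _ _)
  unfold cubePr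
  rw [← add_div]
  gcongr
  exact_mod_cast hcard

lemma cubePr_true : cubePr n (fun _ => True) = 1 := by
  simp [cubePr]

lemma cubePr_le_one : cubePr n P ≤ 1 :=
  (cubePr_mono fun _ _ => trivial).trans_eq cubePr_true

lemma not_of_cubePr_eq_zero (h : cubePr n P = 0) (x : Fin n → Bool) : ¬P x := by
  have hempty : ({x | P x} : Finset (Fin n → Bool)) = ∅ := by simpa [cubePr] using h
  simpa using eq_empty_iff_forall_notMem.1 hempty x

lemma cubeE_succ (f : (Fin (n + 1) → Bool) → ℝ) :
    cubeE (n + 1) f =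
      (cubeE n (fun z => f (Fin.cons true z)) + cubeE n (fun z => f (Fin.cons false z))) / 2 := by
  have hsum : ∑ x, f x = ∑ z : Fin n → Bool, f (Fin.cons true z) +
      ∑ z : Fin n → Bool, f (Fin.cons false z) := by
    rw [← (Fin.consEquiv fun _ : Fin (n + 1) => Bool).sum_comp, Fintype.sum_prod_type,
      Fintype.sum_bool]
    rfl
  simp only [cubeE, hsum]
  field_simp
  ring

lemma cubePr_succ (P : (Fin (n + 1) → Bool) → Prop) :
    cubePr (n + 1) P =
      (cubePr n (fun z => P (Fin.cons true z)) + cubePr n (fun z => P (Fin.cons false z))) / 2 := by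
  simp only [cubePr_eq_cubeE_indicator, cubeE_succ]
  rfl

lemma lin_cons (a : Fin (n + 1) → ℝ) (b : Bool) (z : Fin n → Bool) :
    lin (n + 1) a (Fin.cons b z) = a 0 * sgn1 b + lin n (Fin.tail a) z := by
  simp [lin, Fin.sum_univ_succ, Fin.tail]

end Probability

section Flip

variable {n : ℕ}

/-- The point of the cube obtained from `x` by flipping the coordinates in `S`. -/
def flipOn (S : Finset (Fin n)) (x : Fin n → Bool) : Fin n → Bool :=
  fun i => if i ∈ S then !x i else x i

lemma flipOn_involutive (S : Finset (Fin n)) : Function.Involutive (flipOn S) := by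
  intro x
  ext i
  by_cases hi : i ∈ S <;> simp [flipOn, hi]

lemma flipOn_singleton_cons_zero (b : Bool) (z : Fin n → Bool) :
    flipOn {0} (Fin.cons b z : Fin (n + 1) → Bool) = Fin.cons (!b) z := by
  ext i
  cases i using Fin.cases <;> simp [flipOn]

lemma flipOn_singleton_cons_succ (b : Bool) (z : Fin n → Bool) (i : Fin n) :
    flipOn {i.succ} (Fin.cons b z : Fin (n + 1) → Bool) = Fin.cons b (flipOn {i} z) := by
  ext j
  cases j using Fin.cases <;> simp [flipOn, (Fin.succ_ne_zero i).symm]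

lemma cubeE_comp_flipOn (f : (Fin n → Bool) → ℝ) (S : Finset (Fin n)) :
    cubeE n (fun x => f (flipOn S x)) = cubeE n f := by
  simp only [cubeE]
  rw [(flipOn_involutive S).bijective.sum_comp]

lemma cubePr_comp_flipOn (P : (Fin n → Bool) → Prop) (S : Finset (Fin n)) :
    cubePr n (fun x => P (flipOn S x)) = cubePr n P := by
  simp only [cubePr_eq_cubeE_indicator]
  exact cubeE_comp_flipOn ({x | P x}.indicator 1) S

lemma lin_flipOn (a : Fin n → ℝ) (S : Finset (Fin n)) (x : Fin n → Bool) :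
    lin n a (flipOn S x) = lin n a x - 2 * ∑ i ∈ S, a i * sgn1 (x i) := by
  rw [lin, lin, mul_sum, ← Fintype.sum_ite_mem S, ← sum_sub_distrib]
  refine sum_congr rfl fun i _ => ?_
  by_cases hi : i ∈ S
  · simp only [flipOn, hi, if_true, sgn1_not]
    ring
  · simp [flipOn, hi]

lemma lin_flipOn_singleton (a : Fin n → ℝ) (i : Fin n) (x : Fin n → Bool) :
    lin n a (flipOn {i} x) = lin n a x - 2 * (a i * sgn1 (x i)) := by
  rw [lin_flipOn, sum_singleton]

lemma lin_flipOn_univ (a : Fin n → ℝ) (x : Fin n → Bool) :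
    lin n a (flipOn univ x) = -lin n a x := by
  rw [lin_flipOn, ← lin]
  ring

lemma half_le_cubePr_lt_lin (a : Fin n → ℝ) {t : ℝ} (ht : t < 0) :
    1 / 2 ≤ cubePr n (fun x => t < lin n a x) := by
  have hsymm : cubePr n (fun x => t < -lin n a x) = cubePr n (fun x => t < lin n a x) := by
    simpa only [lin_flipOn_univ] using cubePr_comp_flipOn (fun x => t < lin n a x) univ
  have hcover : 1 ≤ cubePr n (fun x => t < lin n a x) + cubePr n (fun x => t < -lin n a x) :=
    cubePr_true.symm.trans_le <| cubePr_le_add fun x _ => by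
      by_contra! h
      linarith
  linarith

lemma lin_eq_lin_update_zero_add (a : Fin n → ℝ) (i : Fin n) (x : Fin n → Bool) :
    lin n a x = lin n (Function.update a i 0) x + a i * sgn1 (x i) := by
  rw [← sub_eq_iff_eq_add', lin, lin, ← sum_sub_distrib, Fintype.sum_eq_single i]
  · simp
  · simp +contextual

lemma two_mul_cubePr_lin_mem (a : Fin n → ℝ) (i : Fin n) (I : Set ℝ) :
    2 * cubePr n (fun x => lin n a x ∈ I) =
      cubePr n (fun x => lin n (Function.update a i 0) x + |a i| ∈ I) +
        cubePr n (fun x => lin n (Function.update a i 0) x - |a i| ∈ I) := by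
  have hlin := lin_eq_lin_update_zero_add a i
  have hflip : ∀ x, lin n a (flipOn {i} x) =
      lin n (Function.update a i 0) x - a i * sgn1 (x i) := fun x => by
    rw [lin_flipOn_singleton, hlin]
    ring
  rw [two_mul]
  nth_rw 2 [← cubePr_comp_flipOn _ {i}]
  simp only [cubePr_eq_cubeE_indicator, ← cubeE_add]
  congr 1
  ext x
  rcases eq_or_eq_neg_of_abs_eq (abs_mul_sgn1 (a i) (x i)) with hx | hx
  · simp [Set.indicator_apply, hflip, hlin, hx]
  · simp [Set.indicator_apply, hflip, hlin, hx, sub_eq_add_neg, add_comm]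

end Flip

section Subgaussian

variable {n : ℕ}

lemma cubeE_exp_mul_lin (a : Fin n → ℝ) (r : ℝ) :
    cubeE n (fun x => Real.exp (r * lin n a x)) = ∏ i, Real.cosh (r * a i) := by
  have hprod : ∑ x : Fin n → Bool, ∏ i, Real.exp (r * (a i * sgn1 (x i))) =
      ∏ i, (Real.exp (r * (a i * sgn1 true)) + Real.exp (r * (a i * sgn1 false))) := by
    have hswap := prod_univ_sum (fun _ : Fin n => (univ : Finset Bool))
      fun i b => Real.exp (r * (a i * sgn1 b))
    simp only [Fintype.piFinset_univ, Fintype.sum_bool] at hswap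
    exact hswap.symm
  simp only [cubeE, lin, mul_sum, Real.exp_sum, hprod, Real.cosh_eq, prod_div_distrib]
  simp [sgn1]

lemma cubeE_exp_mul_lin_le (a : Fin n → ℝ) (r : ℝ) :
    cubeE n (fun x => Real.exp (r * lin n a x)) ≤ Real.exp (r ^ 2 * (∑ i, a i ^ 2) / 2) := by
  calc cubeE n (fun x => Real.exp (r * lin n a x)) = ∏ i, Real.cosh (r * a i) :=
        cubeE_exp_mul_lin a r
    _ ≤ ∏ i, Real.exp ((r * a i) ^ 2 / 2) :=
        prod_le_prod (fun i _ => (Real.cosh_pos _).le) fun i _ => Real.cosh_le_exp_half_sq _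
    _ = Real.exp (r ^ 2 * (∑ i, a i ^ 2) / 2) := by
        simp only [← Real.exp_sum, mul_pow, mul_sum, sum_div]

lemma cubePr_lt_lin_le_exp {a : Fin n → ℝ} (ha : ∑ i, a i ^ 2 = 1) {t : ℝ} (ht : 0 ≤ t) :
    cubePr n (fun x => t < lin n a x) ≤ Real.exp (-(t ^ 2 / 2)) := by
  have hmarkov : Real.exp (t ^ 2) * cubePr n (fun x => t < lin n a x) ≤
      cubeE n (fun x => Real.exp (t * lin n a x)) :=
    mul_cubePr_le_cubeE (fun x => (Real.exp_pos _).le) fun x hx =>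
      Real.exp_le_exp.2 (by nlinarith)
  have hmgf := cubeE_exp_mul_lin_le a t
  rw [ha, mul_one] at hmgf
  refine le_of_mul_le_mul_left ((hmarkov.trans hmgf).trans_eq ?_) (Real.exp_pos (t ^ 2))
  rw [← Real.exp_add]
  ring_nf

lemma le_two_mul_sqrt_log_of_le_cubePr {a : Fin n → ℝ} (ha : ∑ i, a i ^ 2 = 1) {t ε : ℝ}
    (hε : 0 < ε) (hεt : ε ≤ cubePr n (fun x => t < lin n a x)) : t ≤ 2 * √(Real.log (1 / ε)) := by
  rcases le_total t 0 with ht | ht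
  · exact ht.trans (by positivity)
  have hlog : Real.log ε ≤ -(t ^ 2 / 2) :=
    (Real.log_le_iff_le_exp hε).2 (hεt.trans (cubePr_lt_lin_le_exp ha ht))
  rw [one_div, Real.log_inv]
  have hsq : (t / 2) ^ 2 ≤ -Real.log ε := by linarith [sq_nonneg t]
  linarith [Real.le_sqrt_of_sq_le hsq]

end Subgaussian

lemma half_le_log_one_div {ε : ℝ} (hε : 0 < ε) (hε2 : ε ≤ 1 / 2) :
    1 / 2 ≤ Real.log (1 / ε) := by
  have hle : Real.log 2 ≤ Real.log (1 / ε) :=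
    Real.log_le_log two_pos ((le_div_iff₀ hε).2 (by linarith))
  linarith [Real.log_two_gt_d9]

section LogSobolev

variable {n : ℕ}

/-- The Dirichlet energy of `f` on the cube, the sum over all coordinates of the mean squared
change of `f` when that coordinate is flipped. -/
def energy (n : ℕ) (f : (Fin n → Bool) → ℝ) : ℝ :=
  cubeE n fun x => ∑ i, (f x - f (flipOn {i} x)) ^ 2

lemma energy_succ (f : (Fin (n + 1) → Bool) → ℝ) :
    energy (n + 1) f =
      (energy n (fun z => f (Fin.cons true z)) + energy n (fun z => f (Fin.cons false z))) / 2 +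
        cubeE n (fun z => (f (Fin.cons true z) - f (Fin.cons false z)) ^ 2) := by
  have hsymm : ∀ z : Fin n → Bool, (f (Fin.cons false z) - f (Fin.cons true z)) ^ 2 =
      (f (Fin.cons true z) - f (Fin.cons false z)) ^ 2 := fun z => sub_sq_comm _ _
  simp only [energy, cubeE_succ, Fin.sum_univ_succ, flipOn_singleton_cons_zero,
    flipOn_singleton_cons_succ, cubeE_add, Bool.not_true, Bool.not_false, hsymm]
  ring

lemma sq_sqrt_cubeE_sub_sqrt_cubeE_le (f g : (Fin n → Bool) → ℝ) :
    (√(cubeE n fun x => f x ^ 2) - √(cubeE n fun x => g x ^ 2)) ^ 2 ≤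
      cubeE n fun x => (f x - g x) ^ 2 := by
  have hnorm := sq_le_sq.2 ((abs_norm_sub_norm_le (WithLp.toLp 2 f) (WithLp.toLp 2 g)).trans
    (le_abs_self _))
  simp only [← WithLp.toLp_sub, EuclideanSpace.norm_eq, Real.norm_eq_abs, sq_abs,
    Pi.sub_apply] at hnorm
  rw [Real.sq_sqrt (by positivity)] at hnorm
  simp only [cubeE]
  rw [Real.sqrt_div (by positivity), Real.sqrt_div (by positivity), ← sub_div, div_pow,
    Real.sq_sqrt (by positivity)]
  gcongr

lemma mul_log_le {c s w : ℝ} (hc : 0 ≤ c) (hs : 0 < s) (hw : 0 < w) :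
    c * Real.log w ≤ c * (c / s - 1) + s * w - c := by
  rcases hc.eq_or_lt with rfl | hc
  · simp only [zero_mul, zero_add, sub_zero]
    positivity
  have hlog : Real.log w ≤ (w / (c / s) - 1) + (c / s - 1) :=
    calc Real.log w = Real.log (w / (c / s)) + Real.log (c / s) := by
          rw [← Real.log_mul (by positivity) (by positivity)]
          field_simp
      _ ≤ (w / (c / s) - 1) + (c / s - 1) :=
          add_le_add (Real.log_le_sub_one_of_pos (by positivity))
            (Real.log_le_sub_one_of_pos (by positivity))
  calc c * Real.log w ≤ c * ((w / (c / s) - 1) + (c / s - 1)) := by gcongr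
    _ = c * (c / s - 1) + s * w - c := by
        field_simp
        ring

lemma sq_mul_log_add_sq_mul_log_le (A B : ℝ) {u v : ℝ} (hu : 0 < u) (hv : 0 < v)
    (huv : u + v = 2) : A ^ 2 * Real.log u + B ^ 2 * Real.log v ≤ 2 * (A - B) ^ 2 := by
  rcases (add_nonneg (sq_nonneg A) (sq_nonneg B)).eq_or_lt with h0 | hpos
  · have hA : A = 0 := by nlinarith
    have hB : B = 0 := by nlinarith
    simp [hA, hB]
  set s := (A ^ 2 + B ^ 2) / 2 with hs
  have hs0 : 0 < s := by positivity
  have hsw : s * u + s * v = A ^ 2 + B ^ 2 := by rw [← mul_add, huv, hs]; ring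
  calc A ^ 2 * Real.log u + B ^ 2 * Real.log v
      ≤ A ^ 2 * (A ^ 2 / s - 1) + B ^ 2 * (B ^ 2 / s - 1) := by
        linarith [mul_log_le (sq_nonneg A) hs0 hu, mul_log_le (sq_nonneg B) hs0 hv]
    _ = (A - B) ^ 2 * ((A + B) ^ 2 / (A ^ 2 + B ^ 2)) := by
        rw [hs]
        field_simp
        ring
    _ ≤ (A - B) ^ 2 * 2 := by
        gcongr
        rw [div_le_iff₀ hpos]
        linarith [sq_nonneg (A - B)]
    _ = 2 * (A - B) ^ 2 := mul_comm _ _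

lemma two_point_log_sobolev {A B p q : ℝ} (hp : 0 ≤ p) (hq : 0 ≤ q) (hA : p = 0 → A = 0)
    (hB : q = 0 → B = 0) :
    (A ^ 2 + B ^ 2) * -Real.log ((p + q) / 2) ≤
      A ^ 2 * -Real.log p + B ^ 2 * -Real.log q + 2 * (A - B) ^ 2 := by
  have hlog_half : ∀ {r : ℝ}, 0 < r → -Real.log (r / 2) ≤ -Real.log r + 2 := fun hr => by
    rw [Real.log_div hr.ne' two_ne_zero]
    linarith [Real.log_two_lt_d9]
  rcases hp.eq_or_lt with rfl | hp
  · rcases hq.eq_or_lt with rfl | hq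
    · simp [hA, hB]
    · simp only [hA rfl, zero_add]
      nlinarith [mul_le_mul_of_nonneg_left (hlog_half hq) (sq_nonneg B)]
  rcases hq.eq_or_lt with rfl | hq
  · simp only [hB rfl, add_zero]
    nlinarith [mul_le_mul_of_nonneg_left (hlog_half hp) (sq_nonneg A)]
  have h := sq_mul_log_add_sq_mul_log_le A B (u := p / ((p + q) / 2)) (v := q / ((p + q) / 2))
    (by positivity) (by positivity) (by field_simp)
  rw [Real.log_div hp.ne' (by positivity), Real.log_div hq.ne' (by positivity)] at h
  linarith

theorem cubeE_sq_mul_neg_log_le_energy (f : (Fin n → Bool) → ℝ) :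
    (cubeE n fun x => f x ^ 2) * -Real.log (cubePr n fun x => f x ≠ 0) ≤ energy n f := by
  induction n with
  | zero =>
    have hlog : Real.log (cubePr 0 fun x => f x ≠ 0) = 0 := by
      simp only [cubePr, univ_unique, filter_singleton]
      split_ifs <;> simp
    simp [hlog, energy, cubeE]
  | succ n ih =>
    have hzero : ∀ g : (Fin n → Bool) → ℝ, cubePr n (fun x => g x ≠ 0) = 0 →
        √(cubeE n fun x => g x ^ 2) = 0 := fun g hg => by
      simp [cubeE, not_not.1 (not_of_cubePr_eq_zero hg _)]
    have hsq : ∀ g : (Fin n → Bool) → ℝ,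
        √(cubeE n fun x => g x ^ 2) ^ 2 = cubeE n fun x => g x ^ 2 := fun g =>
      Real.sq_sqrt (cubeE_nonneg fun x => sq_nonneg _)
    have htwo := two_point_log_sobolev cubePr_nonneg cubePr_nonneg
      (hzero fun z => f (Fin.cons true z)) (hzero fun z => f (Fin.cons false z))
    have hdiff := sq_sqrt_cubeE_sub_sqrt_cubeE_le (fun z => f (Fin.cons true z))
      (fun z => f (Fin.cons false z))
    rw [hsq, hsq] at htwo
    rw [energy_succ, cubeE_succ, cubePr_succ]
    linarith [ih fun z => f (Fin.cons true z), ih fun z => f (Fin.cons false z)]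

end LogSobolev

/-- The function of `s` that vanishes up to `A`, then increases with slope `1` until it reaches the
value `w`, and is constant from there on. -/
def ramp (A w s : ℝ) : ℝ := max 0 (min w (s - A))

section Ramp

variable {A w s : ℝ}

lemma ramp_nonneg : 0 ≤ ramp A w s := le_max_left _ _

lemma ramp_le (hw : 0 ≤ w) : ramp A w s ≤ w := max_le hw (min_le_left _ _)

lemma ramp_of_le (hs : s ≤ A) : ramp A w s = 0 :=
  max_eq_left ((min_le_right _ _).trans (by linarith))

lemma ramp_of_mem_Icc (hs : s ∈ Set.Icc A (A + w)) : ramp A w s = s - A := by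
  rw [ramp, min_eq_right (by linarith [hs.2]), max_eq_right (by linarith [hs.1])]

lemma ramp_of_ge (hw : 0 ≤ w) (hs : A + w ≤ s) : ramp A w s = w := by
  rw [ramp, min_eq_left (by linarith), max_eq_right hw]

lemma ramp_ne_zero_iff (hw : 0 < w) : ramp A w s ≠ 0 ↔ A < s := by
  simp [ramp, hw]

lemma ramp_monotone (A w : ℝ) : Monotone (ramp A w) := fun _ _ h =>
  max_le_max le_rfl (min_le_min le_rfl (by linarith))

lemma abs_ramp_sub_ramp_le (A w s s' : ℝ) : |ramp A w s - ramp A w s'| ≤ |s - s'| := by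
  calc |ramp A w s - ramp A w s'| ≤ |min w (s - A) - min w (s' - A)| := by
        simpa [ramp] using abs_max_sub_max_le_max 0 (min w (s - A)) 0 (min w (s' - A))
    _ ≤ |s - s'| := by
        simpa using abs_min_sub_min_le_max w (s - A) w (s' - A)

end Ramp

section Decay

variable {n : ℕ} {a : Fin n → ℝ} {t δ ε : ℝ}

lemma energy_ramp_lin_le (a : Fin n → ℝ) (t δ : ℝ) :
    energy n (fun x => ramp t δ (lin n a x)) ≤
      8 * (∑ i, a i ^ 2) * cubePr n (fun x => t < lin n a x) := by
  let u x := ramp t δ (lin n a x)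
  have hdiff : ∀ i x, (u x - u (flipOn {i} x)) ^ 2 ≤ 4 * a i ^ 2 := fun i x => by
    have h := sq_le_sq.2 (abs_ramp_sub_ramp_le t δ (lin n a x) (lin n a (flipOn {i} x)))
    rw [lin_flipOn_singleton, sub_sub_cancel, mul_pow, mul_sgn1_sq] at h
    simp only [u, lin_flipOn_singleton]
    linarith
  have hcoord : ∀ i, cubeE n (fun x => (u x - u (flipOn {i} x)) ^ 2) ≤
      8 * a i ^ 2 * cubePr n (fun x => t < lin n a x) := fun i => by
    calc cubeE n (fun x => (u x - u (flipOn {i} x)) ^ 2)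
        ≤ 4 * a i ^ 2 * cubePr n (fun x => t < lin n a x ∨ t < lin n a (flipOn {i} x)) := by
          refine cubeE_le_mul_cubePr (fun x _ => hdiff i x) fun x hx => ?_
          rw [not_or, not_lt, not_lt] at hx
          simp [u, ramp_of_le hx.1, ramp_of_le hx.2]
      _ ≤ 4 * a i ^ 2 * (cubePr n (fun x => t < lin n a x) +
            cubePr n (fun x => t < lin n a (flipOn {i} x))) := by
          gcongr
          exact cubePr_le_add fun _ => id
      _ = 8 * a i ^ 2 * cubePr n (fun x => t < lin n a x) := by
          rw [cubePr_comp_flipOn fun x => t < lin n a x]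
          ring
  calc energy n u = ∑ i, cubeE n (fun x => (u x - u (flipOn {i} x)) ^ 2) := cubeE_sum _ _
    _ ≤ ∑ i, 8 * a i ^ 2 * cubePr n (fun x => t < lin n a x) := sum_le_sum fun i _ => hcoord i
    _ = 8 * (∑ i, a i ^ 2) * cubePr n (fun x => t < lin n a x) := by rw [mul_sum, sum_mul]

lemma sq_mul_cubePr_mul_neg_log_le (a : Fin n → ℝ) (hδ : 0 < δ) :
    δ ^ 2 * cubePr n (fun x => t + δ < lin n a x) *
        -Real.log (cubePr n fun x => t < lin n a x) ≤
      8 * (∑ i, a i ^ 2) * cubePr n (fun x => t < lin n a x) := by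
  have hsob := cubeE_sq_mul_neg_log_le_energy fun x => ramp t δ (lin n a x)
  simp only [ramp_ne_zero_iff hδ] at hsob
  have hmass : δ ^ 2 * cubePr n (fun x => t + δ < lin n a x) ≤
      cubeE n (fun x => ramp t δ (lin n a x) ^ 2) :=
    mul_cubePr_le_cubeE (fun x => sq_nonneg _) fun x hx => by rw [ramp_of_ge hδ.le hx.le]
  have hlog : 0 ≤ -Real.log (cubePr n fun x => t < lin n a x) :=
    neg_nonneg.2 (Real.log_nonpos cubePr_nonneg cubePr_le_one)
  exact (mul_le_mul_of_nonneg_right hmass hlog).trans (hsob.trans (energy_ramp_lin_le a t δ))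

lemma cubePr_add_div_sqrt_log_le_half (ha : ∑ i, a i ^ 2 = 1) (ht : -1 ≤ t)
    (hε : ε = min (1 / 2) (cubePr n fun x => t < lin n a x)) (hε0 : 0 < ε) :
    cubePr n (fun x => t + 4 / √(Real.log (1 / ε)) < lin n a x) ≤
      cubePr n (fun x => t < lin n a x) / 2 := by
  have hlog := half_le_log_one_div hε0 (hε ▸ min_le_left _ _)
  have hq : 0 < √(Real.log (1 / ε)) := Real.sqrt_pos.2 (by linarith)
  rcases le_total (1 / 2) (cubePr n fun x => t < lin n a x) with hT | hT
  · have hq1 : √(Real.log (1 / ε)) ≤ 1 := by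
      rw [hε, min_eq_left hT, one_div_one_div]
      exact Real.sqrt_le_one.2 (by linarith [Real.log_two_lt_d9])
    have hshift : 3 ≤ t + 4 / √(Real.log (1 / ε)) := by
      linarith [(le_div_iff₀ hq).2 (by linarith : 4 * √(Real.log (1 / ε)) ≤ 4)]
    calc cubePr n (fun x => t + 4 / √(Real.log (1 / ε)) < lin n a x)
        ≤ cubePr n (fun x => 2 < lin n a x) := cubePr_mono fun x hx => by linarith
      _ ≤ Real.exp (-(2 ^ 2 / 2)) := cubePr_lt_lin_le_exp ha two_pos.le
      _ ≤ 1 / 4 := by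
          rw [Real.exp_neg, one_div]
          gcongr
          linarith [Real.quadratic_le_exp_of_nonneg (x := 2 ^ 2 / 2) (by norm_num)]
      _ ≤ cubePr n (fun x => t < lin n a x) / 2 := by linarith
  · rw [min_eq_right hT] at hε
    have hdecay := sq_mul_cubePr_mul_neg_log_le (t := t) a (div_pos four_pos hq)
    have hcancel : (4 / √(Real.log (1 / ε))) ^ 2 * -Real.log ε = 16 := by
      rw [div_pow, Real.sq_sqrt (by linarith), ← Real.log_inv, ← one_div,
        div_mul_cancel₀ _ (by linarith)]
      norm_num
    rw [ha, ← hε, mul_right_comm, hcancel] at hdecay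
    linarith

end Decay

section Reflection

variable {n : ℕ} {a : Fin n → ℝ} {m s t : ℝ} {i : Fin n}

/-- Reflection principle: the first partial sum to reach `(v - u) / 2` overshoots it by at most `m`,
and negating the coordinates in it shifts `l` down by twice its value. -/
theorem cubePr_lin_mem_Ioc_le_reflect {u v : ℝ} (w : ℝ) (ha : ∀ i, |a i| ≤ m)
    (huv : u - 2 * m ≤ v) (hadd : 0 ≤ u + v) :
    cubePr n (fun x => lin n a x ∈ Set.Ioc v (v + w)) ≤
      cubePr n (fun x => lin n a x ∈ Set.Ioc (u - 2 * m) (u + w)) := by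
  induction n generalizing u v with
  | zero =>
    refine cubePr_mono fun x hx => ?_
    simp only [lin, univ_eq_empty, sum_empty] at hx ⊢
    exact ⟨by linarith [hx.1], by linarith [hx.1, hx.2]⟩
  | succ n ih =>
    rcases le_or_gt v u with hle | hlt
    · exact cubePr_mono fun x hx => ⟨huv.trans_lt hx.1, hx.2.trans (by linarith)⟩
    have hstep : ∀ b, cubePr n (fun z => lin (n + 1) a (Fin.cons b z) ∈ Set.Ioc v (v + w)) ≤
        cubePr n (fun z => lin (n + 1) a (Fin.cons (!b) z) ∈
          Set.Ioc (u - 2 * m) (u + w)) := fun b => by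
      have hc := abs_le.1 ((abs_mul_sgn1 (a 0) b).trans_le (ha 0))
      refine (cubePr_mono fun z hz => ?_).trans ((ih (a := Fin.tail a)
        (u := u + a 0 * sgn1 b) (v := v - a 0 * sgn1 b) (fun i => ha i.succ) (by linarith)
        (by linarith)).trans (cubePr_mono fun z hz => ?_))
      · rw [lin_cons] at hz
        exact ⟨by linarith [hz.1], by linarith [hz.2]⟩
      · rw [lin_cons, sgn1_not]
        exact ⟨by linarith [hz.1], by linarith [hz.2]⟩
    rw [cubePr_succ, cubePr_succ, add_comm]
    exact div_le_div_of_nonneg_right (add_le_add (hstep false) (hstep true)) two_pos.le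

lemma cubePr_lin_mem_Ioc_le_two_mul (hi : ∀ j, |a j| ≤ |a i|) (ht : -|a i| ≤ t)
    (hts : t + 2 * |a i| ≤ s) :
    cubePr n (fun x => lin n a x ∈ Set.Ioc s (s + 2 * |a i|)) ≤
      2 * cubePr n (fun x => lin n a x ∈ Set.Ioc t (t + 2 * |a i|)) := by
  have hs := two_mul_cubePr_lin_mem a i (Set.Ioc s (s + 2 * |a i|))
  have ht' := two_mul_cubePr_lin_mem a i (Set.Ioc t (t + 2 * |a i|))
  set r := |a i|
  set b := Function.update a i 0
  have hr : 0 ≤ r := abs_nonneg _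
  have hb : ∀ j, |b j| ≤ r := fun j => by
    by_cases hj : j = i
    · simp [b, hj, hr]
    · simpa [b, hj] using hi j
  have hreflect : ∀ v, t + r ≤ v → cubePr n (fun x => lin n b x ∈ Set.Ioc v (v + 2 * r)) ≤
      cubePr n (fun x => lin n b x ∈ Set.Ioc (t + r - 2 * r) (t + r + 2 * r)) := fun v hv =>
    cubePr_lin_mem_Ioc_le_reflect (2 * r) hb (by linarith) (by linarith)
  have hunion : cubePr n (fun x => lin n b x ∈ Set.Ioc (t + r - 2 * r) (t + r + 2 * r)) ≤
      cubePr n (fun x => lin n b x + r ∈ Set.Ioc t (t + 2 * r)) +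
        cubePr n (fun x => lin n b x - r ∈ Set.Ioc t (t + 2 * r)) :=
    cubePr_le_add fun x hx => by
      rcases le_or_gt (lin n b x) (t + r) with h | h
      · exact .inl ⟨by linarith [hx.1], by linarith⟩
      · exact .inr ⟨by linarith, by linarith [hx.2]⟩
  have hplus : cubePr n (fun x => lin n b x + r ∈ Set.Ioc s (s + 2 * r)) ≤
      cubePr n (fun x => lin n b x ∈ Set.Ioc (s - r) (s - r + 2 * r)) :=
    cubePr_mono fun x hx => ⟨by linarith [hx.1], by linarith [hx.2]⟩
  have hminus : cubePr n (fun x => lin n b x - r ∈ Set.Ioc s (s + 2 * r)) ≤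
      cubePr n (fun x => lin n b x ∈ Set.Ioc (s + r) (s + r + 2 * r)) :=
    cubePr_mono fun x hx => ⟨by linarith [hx.1], by linarith [hx.2]⟩
  linarith [hreflect (s - r) (by linarith), hreflect (s + r) (by linarith)]

lemma exists_window_cubePr_le_two_mul (hi : ∀ j, |a j| ≤ |a i|) (hm : |a i| ≤ m)
    (ht : -|a i| ≤ t) :
    ∃ w, m ≤ w ∧ ∀ j : ℕ, cubePr n (fun x => lin n a x ∈ Set.Ioc (t + j * w) (t + j * w + w)) ≤
      2 * cubePr n (fun x => lin n a x ∈ Set.Ioc t (t + 2 * m)) := by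
  have hr : 0 ≤ |a i| := abs_nonneg _
  rcases le_total (2 * |a i|) m with hsmall | hlarge
  · refine ⟨2 * m - 2 * |a i|, by linarith, fun j => ?_⟩
    have hj : 0 ≤ j * (2 * m - 2 * |a i|) := mul_nonneg j.cast_nonneg (by linarith)
    have hreflect := cubePr_lin_mem_Ioc_le_reflect (u := t + 2 * |a i|)
      (v := t + j * (2 * m - 2 * |a i|)) (2 * m - 2 * |a i|) hi (by linarith) (by linarith)
    rw [add_sub_cancel_right, add_assoc t (2 * |a i|), add_sub_cancel] at hreflect
    linarith [cubePr_nonneg (n := n) (P := fun x => lin n a x ∈ Set.Ioc t (t + 2 * m))]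
  · refine ⟨2 * |a i|, hlarge, fun j => ?_⟩
    have hwiden : cubePr n (fun x => lin n a x ∈ Set.Ioc t (t + 2 * |a i|)) ≤
        cubePr n (fun x => lin n a x ∈ Set.Ioc t (t + 2 * m)) :=
      cubePr_mono fun x hx => ⟨hx.1, hx.2.trans (by linarith)⟩
    rcases j.eq_zero_or_pos with rfl | hj
    · simp only [Nat.cast_zero, zero_mul, add_zero]
      linarith [cubePr_nonneg (n := n) (P := fun x => lin n a x ∈ Set.Ioc t (t + 2 * |a i|))]
    · have hj1 : (1 : ℝ) ≤ j := by exact_mod_cast hj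
      have hshift : t + 2 * |a i| ≤ t + j * (2 * |a i|) := by nlinarith
      linarith [cubePr_lin_mem_Ioc_le_two_mul hi ht hshift]

end Reflection

section LowerBound

variable {n : ℕ} {a : Fin n → ℝ} {m t ε : ℝ}

lemma cubePr_lt_lin_le_mul_add {w B : ℝ}
    (hB : ∀ j : ℕ, cubePr n (fun x => lin n a x ∈ Set.Ioc (t + j * w) (t + j * w + w)) ≤ B)
    (N : ℕ) :
    cubePr n (fun x => t < lin n a x) ≤ N * B + cubePr n (fun x => t + N * w < lin n a x) := by
  induction N with
  | zero => simp
  | succ N ih =>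
    have hsplit : cubePr n (fun x => t + N * w < lin n a x) ≤
        cubePr n (fun x => lin n a x ∈ Set.Ioc (t + N * w) (t + N * w + w)) +
          cubePr n (fun x => t + (N + 1 : ℕ) * w < lin n a x) :=
      cubePr_le_add fun x hx => by
        rcases le_or_gt (lin n a x) (t + N * w + w) with h | h
        · exact .inl ⟨hx, h⟩
        · exact .inr (by push_cast; linarith)
    push_cast at hsplit ⊢
    linarith [hB N]

lemma mul_min_le_mul_cubePr_of_neg_abs_le {i : Fin n} (ha : ∑ i, a i ^ 2 = 1)
    (hi : ∀ j, |a j| ≤ |a i|) (hi0 : 0 < |a i|) (hi1 : |a i| ≤ 1) (hm : |a i| ≤ m)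
    (ht : -|a i| ≤ t) (hε : ε = min (1 / 2) (cubePr n fun x => t < lin n a x)) (hε0 : 0 < ε) :
    ε * min 1 (m * √(Real.log (1 / ε))) ≤
      20 * cubePr n (fun x => lin n a x ∈ Set.Ioc t (t + 2 * m)) := by
  obtain ⟨w, hmw, hw⟩ := exists_window_cubePr_le_two_mul hi hm ht
  have hhalf := cubePr_add_div_sqrt_log_le_half ha (by linarith) hε hε0
  have hlog := half_le_log_one_div hε0 (hε ▸ min_le_left _ _)
  have hq : 0 < √(Real.log (1 / ε)) := Real.sqrt_pos.2 (by linarith)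
  have hεT : ε ≤ cubePr n fun x => t < lin n a x := hε ▸ min_le_right _ _
  have hm0 : 0 < m := hi0.trans_le hm
  set q := √(Real.log (1 / ε))
  set Q := cubePr n (fun x => lin n a x ∈ Set.Ioc t (t + 2 * m))
  have hQ : 0 ≤ Q := cubePr_nonneg
  set N := ⌈4 / q / w⌉₊
  have hNw : 4 / q ≤ N * w := (div_le_iff₀ (hm0.trans_le hmw)).1 (Nat.le_ceil _)
  have hN : (N : ℝ) ≤ 4 / q / m + 1 :=
    (Nat.ceil_lt_add_one (div_nonneg (by positivity) (hm0.le.trans hmw))).le.trans (by gcongr)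
  have htail : cubePr n (fun x => t + N * w < lin n a x) ≤
      cubePr n (fun x => t + 4 / q < lin n a x) := cubePr_mono fun x hx => by linarith
  calc ε * min 1 (m * q) ≤ 4 * N * Q * min 1 (m * q) := by
        gcongr
        linarith [cubePr_lt_lin_le_mul_add hw N]
    _ ≤ 4 * (4 / q / m + 1) * Q * min 1 (m * q) := by gcongr
    _ = 4 * Q * (4 / q / m * min 1 (m * q) + min 1 (m * q)) := by ring
    _ ≤ 4 * Q * (4 / q / m * (m * q) + 1) := by
        gcongr
        · exact min_le_right _ _
        · exact min_le_left _ _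
    _ = 20 * Q := by
        field_simp
        ring

lemma exists_forall_abs_le_abs (ha : ∑ i, a i ^ 2 = 1) :
    ∃ i, (∀ j, |a j| ≤ |a i|) ∧ 0 < |a i| ∧ |a i| ≤ 1 := by
  have hne : ∃ i, a i ≠ 0 := by
    by_contra! h
    simp [h] at ha
  obtain ⟨k, hk⟩ := hne
  have : Nonempty (Fin n) := ⟨k⟩
  obtain ⟨i, hi⟩ := Finite.exists_max fun j => |a j|
  have hsq : a i ^ 2 ≤ 1 := ha ▸ single_le_sum (fun j _ => sq_nonneg (a j)) (mem_univ i)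
  exact ⟨i, hi, (abs_pos.2 hk).trans_le (hi k), (sq_le_one_iff_abs_le_one _).1 hsq⟩

theorem mul_min_le_mul_cubePr_lin_mem_Ioc (ha : ∑ i, a i ^ 2 = 1) (hm : ∀ i, |a i| ≤ m)
    (hε : ε = min (1 / 2) (cubePr n fun x => t < lin n a x)) (hε0 : 0 < ε) (ht : -m ≤ t) :
    ε * min 1 (m * √(Real.log (1 / ε))) ≤
      40 * cubePr n (fun x => lin n a x ∈ Set.Ioc t (t + 2 * m)) := by
  obtain ⟨i, hi, hi0, hi1⟩ := exists_forall_abs_le_abs ha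
  rcases le_or_gt (-|a i|) t with hti | hti
  · have hlower := mul_min_le_mul_cubePr_of_neg_abs_le ha hi hi0 hi1 (hm i) hti hε hε0
    linarith [cubePr_nonneg (n := n) (P := fun x => lin n a x ∈ Set.Ioc t (t + 2 * m))]
  -- Below `-|a i|` the tail is at least `1/2`, and the window contains `(-|a i|, m]`.
  have hhalf : ∀ {s}, s < 0 → min (1 / 2) (cubePr n fun x => s < lin n a x) = 1 / 2 := fun hs =>
    min_eq_left (half_le_cubePr_lt_lin a hs)
  rw [hhalf (by linarith)] at hε
  have hlower := mul_min_le_mul_cubePr_of_neg_abs_le (m := (m + |a i|) / 2) ha hi hi0 hi1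
    (by linarith [hm i]) le_rfl (hε.trans (hhalf (by linarith)).symm) hε0
  have hwindow : cubePr n (fun x => lin n a x ∈ Set.Ioc (-|a i|) (-|a i| + 2 * ((m + |a i|) / 2))) ≤
      cubePr n (fun x => lin n a x ∈ Set.Ioc t (t + 2 * m)) :=
    cubePr_mono fun x hx => ⟨hti.trans hx.1, hx.2.trans (by linarith)⟩
  have hmin : min 1 (m * √(Real.log (1 / ε))) ≤
      2 * min 1 ((m + |a i|) / 2 * √(Real.log (1 / ε))) := by
    rw [mul_min_of_nonneg _ _ two_pos.le]
    refine min_le_min (by norm_num) ?_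
    nlinarith [Real.sqrt_nonneg (Real.log (1 / ε))]
  linarith [mul_le_mul_of_nonneg_left hmin hε0.le]

end LowerBound

section Level1

variable {n : ℕ} {a : Fin n → ℝ} {f : (Fin n → Bool) → ℝ} {m t w T ε : ℝ}

lemma two_mul_cubeE_mul_lin (a : Fin n → ℝ) (f : (Fin n → Bool) → ℝ) :
    2 * cubeE n (fun x => f x * lin n a x) =
      cubeE n (fun x => ∑ i, (f x - f (flipOn {i} x)) * (a i * sgn1 (x i))) := by
  have hcoord : ∀ i, cubeE n (fun x => (f x - f (flipOn {i} x)) * (a i * sgn1 (x i))) =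
      2 * cubeE n (fun x => f x * (a i * sgn1 (x i))) := fun i => by
    have hflip : cubeE n (fun x => -f (flipOn {i} x) * (a i * sgn1 (x i))) =
        cubeE n (fun x => f x * (a i * sgn1 (x i))) := by
      rw [← cubeE_comp_flipOn (fun x => f x * (a i * sgn1 (x i))) {i}]
      simp [flipOn, sgn1_not]
    simp only [sub_eq_add_neg, add_mul, cubeE_add, hflip]
    ring
  simp only [lin, mul_sum, cubeE_sum, hcoord]

lemma sum_sq_mul_cubePr_lin_mem_Ioc_le (hm : ∀ i, |a i| ≤ m) :
    (∑ i, a i ^ 2) * cubePr n (fun x => lin n a x ∈ Set.Ioc t (t + 2 * m)) ≤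
      cubeE n (fun x => ramp (t - 2 * m) (6 * m) (lin n a x) * lin n a x) := by
  let f x := ramp (t - 2 * m) (6 * m) (lin n a x)
  have hterm_nonneg : ∀ x i, 0 ≤ (f x - f (flipOn {i} x)) * (a i * sgn1 (x i)) := fun x i => by
    have hlin := lin_flipOn_singleton a i x
    rcases le_total 0 (a i * sgn1 (x i)) with h | h
    · exact mul_nonneg (sub_nonneg.2 (ramp_monotone _ _ (by linarith))) h
    · exact mul_nonneg_of_nonpos_of_nonpos (sub_nonpos.2 (ramp_monotone _ _ (by linarith))) h
  have hterm : ∀ x, lin n a x ∈ Set.Ioc t (t + 2 * m) → ∀ i,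
      (f x - f (flipOn {i} x)) * (a i * sgn1 (x i)) = 2 * a i ^ 2 := fun x hx i => by
    have hc := abs_le.1 ((abs_mul_sgn1 (a i) (x i)).trans_le (hm i))
    have hlin := lin_flipOn_singleton a i x
    rw [← mul_sgn1_sq (a i) (x i)]
    simp only [f]
    rw [ramp_of_mem_Icc ⟨by linarith [hx.1], by linarith [hx.2]⟩,
      ramp_of_mem_Icc ⟨by linarith [hx.1], by linarith [hx.2]⟩, hlin]
    ring
  have hbound : 2 * (∑ i, a i ^ 2) * cubePr n (fun x => lin n a x ∈ Set.Ioc t (t + 2 * m)) ≤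
      cubeE n (fun x => ∑ i, (f x - f (flipOn {i} x)) * (a i * sgn1 (x i))) :=
    mul_cubePr_le_cubeE (fun x => sum_nonneg fun i _ => hterm_nonneg x i) fun x hx => by
      simp only [hterm x hx, mul_sum, le_refl]
  rw [← two_mul_cubeE_mul_lin] at hbound
  linarith

theorem cubeE_mul_lin_le_sqrt_log (ha : ∑ i, a i ^ 2 = 1) (hf0 : ∀ x, 0 ≤ f x)
    (hfw : ∀ x, f x ≤ w) (hfT : cubeE n f ≤ w * T) (hε0 : 0 < ε) (hε2 : ε ≤ 1 / 2)
    (hεT : ε ≤ T) :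
    cubeE n (fun x => f x * lin n a x) ≤ w * T * √(2 * Real.log (1 / ε)) := by
  have hlog := half_le_log_one_div hε0 hε2
  have hexp : Real.exp (-Real.log (1 / ε)) = ε := by
    rw [one_div, Real.log_inv, neg_neg, Real.exp_log hε0]
  set L := Real.log (1 / ε)
  set r := √(2 * L)
  have hr : r ^ 2 = 2 * L := Real.sq_sqrt (by linarith)
  have hr0 : 0 < r := Real.sqrt_pos.2 (by linarith)
  have hw : 0 ≤ w := (hf0 default).trans (hfw default)
  have hmgf : cubeE n (fun x => Real.exp (r * lin n a x)) ≤ Real.exp L :=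
    (cubeE_exp_mul_lin_le a r).trans_eq (by rw [hr, ha]; ring_nf)
  have hpoint : ∀ x, r * (f x * lin n a x) ≤
      (2 * L - 1) * f x + w * Real.exp (-(2 * L)) * Real.exp (r * lin n a x) := fun x => by
    rw [mul_assoc, ← Real.exp_add]
    have hexp_ge := Real.add_one_le_exp (-(2 * L) + r * lin n a x)
    have := mul_le_mul_of_nonneg_left hexp_ge (hf0 x)
    have := mul_le_mul_of_nonneg_right (hfw x) (Real.exp_pos (-(2 * L) + r * lin n a x)).le
    linarith
  have hmean := cubeE_mono hpoint
  simp only [cubeE_add, cubeE_const_mul] at hmean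
  refine le_of_mul_le_mul_left ?_ hr0
  calc r * cubeE n (fun x => f x * lin n a x)
      ≤ (2 * L - 1) * cubeE n f +
          w * Real.exp (-(2 * L)) * cubeE n (fun x => Real.exp (r * lin n a x)) := hmean
    _ ≤ (2 * L - 1) * (w * T) + w * Real.exp (-(2 * L)) * Real.exp L := by
        gcongr
        linarith
    _ = (2 * L - 1) * (w * T) + w * ε := by
        rw [mul_assoc w, ← Real.exp_add, ← hexp]
        ring_nf
    _ ≤ r ^ 2 * (w * T) := by
        rw [hr]
        linarith [mul_le_mul_of_nonneg_left hεT hw]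
    _ = r * (w * T * r) := by ring

end Level1

section BernoulliWeight

variable {ι : Type*} [Fintype ι] [DecidableEq ι] {b : ι → ℝ} {p v : ℝ}

/-- The probability that a random subset of `ι`, containing each element independently with
probability `p`, equals `S`. -/
def bernoulliWeight (p : ℝ) (S : Finset ι) : ℝ := p ^ #S * (1 - p) ^ #Sᶜ

lemma bernoulliWeight_nonneg (hp0 : 0 ≤ p) (hp1 : p ≤ 1) (S : Finset ι) :
    0 ≤ bernoulliWeight p S :=
  mul_nonneg (pow_nonneg hp0 _) (pow_nonneg (sub_nonneg.2 hp1) _)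

lemma sum_bernoulliWeight_mul_exp_sum (p : ℝ) (b : ι → ℝ) :
    ∑ S, bernoulliWeight p S * Real.exp (∑ i ∈ S, b i) =
      ∏ i, (1 + p * (Real.exp (b i) - 1)) := by
  calc ∑ S, bernoulliWeight p S * Real.exp (∑ i ∈ S, b i)
      = ∑ S : Finset ι, (∏ i ∈ S, p * Real.exp (b i)) * ∏ i ∈ Sᶜ, (1 - p) := by
        refine sum_congr rfl fun S _ => ?_
        rw [bernoulliWeight, prod_mul_distrib, prod_const, prod_const, Real.exp_sum]
        ring
    _ = ∏ i, (p * Real.exp (b i) + (1 - p)) := (Fintype.prod_add _ _).symm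
    _ = ∏ i, (1 + p * (Real.exp (b i) - 1)) := prod_congr rfl fun i _ => by ring

lemma sum_bernoulliWeight (p : ℝ) : ∑ S : Finset ι, bernoulliWeight p S = 1 := by
  simpa using sum_bernoulliWeight_mul_exp_sum (ι := ι) p 0

lemma one_add_mul_exp_sub_one_le (hv : |v| ≤ 1) (hp : 0 ≤ p) :
    1 + p * (Real.exp v - 1) ≤ Real.exp (p * (v + v ^ 2)) := by
  have hexp : Real.exp v - 1 ≤ v + v ^ 2 := by
    linarith [(abs_le.1 (Real.abs_exp_sub_one_sub_id_le hv)).2]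
  linarith [mul_le_mul_of_nonneg_left hexp hp, Real.add_one_le_exp (p * (v + v ^ 2))]

lemma exp_le_one_add_mul_exp_sub_one (hv : |v| ≤ 1) (hp0 : 0 ≤ p) (hp : p ≤ 1 / 64) :
    Real.exp (p * (v + v ^ 2 / 8)) ≤ 1 + p * (Real.exp v - 1) := by
  have hv' := abs_le.1 hv
  have hexp : v + v ^ 2 / 4 ≤ Real.exp v - 1 := by
    have hsq : (v / 2 + 1) ^ 2 ≤ Real.exp (v / 2) ^ 2 :=
      pow_le_pow_left₀ (by linarith) (Real.add_one_le_exp _) 2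
    rw [← Real.exp_nat_mul, Nat.cast_two, mul_div_cancel₀ v two_ne_zero] at hsq
    linarith
  have hz : |p * (v + v ^ 2 / 8)| ≤ 2 * p * |v| := by
    have hbracket : |v + v ^ 2 / 8| ≤ 2 * |v| := by
      rw [show v + v ^ 2 / 8 = v * (1 + v / 8) by ring, abs_mul, mul_comm]
      gcongr
      exact abs_le.2 ⟨by linarith, by linarith⟩
    rw [abs_mul, abs_of_nonneg hp0]
    linarith [mul_le_mul_of_nonneg_left hbracket hp0]
  have hz1 : |p * (v + v ^ 2 / 8)| ≤ 1 := hz.trans (by nlinarith [abs_nonneg v])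
  have hzsq : (p * (v + v ^ 2 / 8)) ^ 2 ≤ p * (v ^ 2 / 16) := by
    calc (p * (v + v ^ 2 / 8)) ^ 2 ≤ (2 * p * |v|) ^ 2 := sq_le_sq.2 (hz.trans (le_abs_self _))
      _ = 4 * p * (p * v ^ 2) := by rw [mul_pow, sq_abs]; ring
      _ ≤ 4 * (1 / 64) * (p * v ^ 2) := by gcongr
      _ = p * (v ^ 2 / 16) := by ring
  linarith [(abs_le.1 (Real.abs_exp_sub_one_sub_id_le hz1)).2, mul_le_mul_of_nonneg_left hexp hp0,
    mul_nonneg hp0 (sq_nonneg v)]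

lemma sum_bernoulliWeight_mul_exp_sum_le (hb : ∀ i, |b i| ≤ 1) (hp0 : 0 ≤ p) (hp1 : p ≤ 1) :
    ∑ S, bernoulliWeight p S * Real.exp (∑ i ∈ S, b i) ≤
      Real.exp (p * (∑ i, b i + ∑ i, b i ^ 2)) := by
  rw [sum_bernoulliWeight_mul_exp_sum, ← sum_add_distrib, mul_sum, Real.exp_sum]
  refine prod_le_prod (fun i _ => ?_) fun i _ => one_add_mul_exp_sub_one_le (hb i) hp0
  linarith [mul_nonneg hp0 (Real.exp_pos (b i)).le]

lemma exp_le_sum_bernoulliWeight_mul_exp_sum (hb : ∀ i, |b i| ≤ 1) (hp0 : 0 ≤ p)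
    (hp : p ≤ 1 / 64) :
    Real.exp (p * (∑ i, b i + (∑ i, b i ^ 2) / 8)) ≤
      ∑ S, bernoulliWeight p S * Real.exp (∑ i ∈ S, b i) := by
  rw [sum_bernoulliWeight_mul_exp_sum, sum_div, ← sum_add_distrib, mul_sum, Real.exp_sum]
  exact prod_le_prod (fun i _ => (Real.exp_pos _).le) fun i _ =>
    exp_le_one_add_mul_exp_sub_one (hb i) hp0 hp

end BernoulliWeight

lemma paley_zygmund {ι : Type*} [Fintype ι] {μ X : ι → ℝ} {θ : ℝ} (hμ0 : ∀ i, 0 ≤ μ i)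
    (hμ1 : ∑ i, μ i = 1) (hθ0 : 0 ≤ θ) (hθ : θ ≤ ∑ i, μ i * X i) :
    (∑ i, μ i * X i - θ) ^ 2 ≤ (∑ i, μ i * X i ^ 2) * ∑ i with θ < X i, μ i := by
  have htrunc : ∑ i, μ i * X i - θ ≤ ∑ i with θ < X i, μ i * X i := by
    calc ∑ i, μ i * X i - θ = ∑ i, μ i * (X i - θ) := by
          simp only [mul_sub, sum_sub_distrib, ← sum_mul, hμ1, one_mul]
      _ ≤ ∑ i, if θ < X i then μ i * X i else 0 := by
          refine sum_le_sum fun i _ => ?_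
          split_ifs with h
          · exact mul_le_mul_of_nonneg_left (by linarith) (hμ0 i)
          · exact mul_nonpos_of_nonneg_of_nonpos (hμ0 i) (by linarith)
      _ = ∑ i with θ < X i, μ i * X i := (sum_filter _ _).symm
  calc (∑ i, μ i * X i - θ) ^ 2 ≤ (∑ i with θ < X i, μ i * X i) ^ 2 :=
        pow_le_pow_left₀ (sub_nonneg.2 hθ) htrunc 2
    _ ≤ (∑ i with θ < X i, μ i * X i ^ 2) * ∑ i with θ < X i, μ i :=
        sum_sq_le_sum_mul_sum_of_sq_le_mul _ (fun i _ => mul_nonneg (hμ0 i) (sq_nonneg _))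
          (fun i _ => hμ0 i) fun i _ => le_of_eq (by ring)
    _ ≤ (∑ i, μ i * X i ^ 2) * ∑ i with θ < X i, μ i := by
        gcongr
        · exact sum_nonneg fun i _ => hμ0 i
        · exact fun i _ _ => mul_nonneg (hμ0 i) (sq_nonneg _)
        · exact subset_univ _

lemma one_le_exp_mul_sum_bernoulliWeight {ι : Type*} [Fintype ι] [DecidableEq ι] {c : ι → ℝ}
    {p K : ℝ} (hc : ∀ i, |c i| ≤ 1 / 2) (hp0 : 0 ≤ p) (hp : p ≤ 1 / 64)
    (hlow : 3 / 2 ≤ p * (∑ i, c i + (∑ i, c i ^ 2) / 8))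
    (hK : p * (2 * ∑ i, c i + 4 * ∑ i, c i ^ 2) ≤ K) :
    1 ≤ Real.exp K * ∑ S with 1 / 2 < ∑ i ∈ S, c i, bernoulliWeight p S := by
  let W (S : Finset ι) := Real.exp (∑ i ∈ S, c i - 1 / 2)
  have hfirst : 2 ≤ ∑ S, bernoulliWeight p S * W S := by
    have hmgf := exp_le_sum_bernoulliWeight_mul_exp_sum (fun i => (hc i).trans (by norm_num)) hp0 hp
    calc (2 : ℝ) ≤ Real.exp 1 := by linarith [Real.add_one_le_exp 1]
      _ ≤ Real.exp (p * (∑ i, c i + (∑ i, c i ^ 2) / 8)) * Real.exp (-(1 / 2)) := by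
          rw [← Real.exp_add]
          exact Real.exp_le_exp.2 (by linarith)
      _ ≤ (∑ S, bernoulliWeight p S * Real.exp (∑ i ∈ S, c i)) * Real.exp (-(1 / 2)) := by gcongr
      _ = ∑ S, bernoulliWeight p S * W S := by
          simp only [W, sum_mul, mul_assoc, sub_eq_add_neg, Real.exp_add]
  have hsecond : ∑ S, bernoulliWeight p S * W S ^ 2 ≤ Real.exp K := by
    have hmgf := sum_bernoulliWeight_mul_exp_sum_le (b := fun i => 2 * c i)
      (fun i => by rw [abs_mul, abs_two]; linarith [hc i]) hp0 (by linarith)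
    calc ∑ S, bernoulliWeight p S * W S ^ 2
        ≤ ∑ S, bernoulliWeight p S * Real.exp (∑ i ∈ S, 2 * c i) := by
          gcongr with S
          · exact bernoulliWeight_nonneg hp0 (by linarith) S
          · rw [← Real.exp_nat_mul, ← mul_sum]
            exact Real.exp_le_exp.2 (by push_cast; linarith)
      _ ≤ Real.exp (p * (∑ i, 2 * c i + ∑ i, (2 * c i) ^ 2)) := hmgf
      _ ≤ Real.exp K := by
          refine Real.exp_le_exp.2 (le_trans (le_of_eq ?_) hK)
          simp only [mul_pow, ← mul_sum]
          norm_num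
  have hpz := paley_zygmund (bernoulliWeight_nonneg hp0 (by linarith)) (sum_bernoulliWeight p)
    zero_le_one (by linarith : 1 ≤ ∑ S, bernoulliWeight p S * W S)
  simp only [W, Real.one_lt_exp_iff, sub_pos] at hpz
  calc (1 : ℝ) ≤ (∑ S, bernoulliWeight p S * W S - 1) ^ 2 := by nlinarith
    _ ≤ _ := hpz
    _ ≤ Real.exp K * ∑ S with 1 / 2 < ∑ i ∈ S, c i, bernoulliWeight p S := by
        gcongr
        exact sum_nonneg fun S _ => bernoulliWeight_nonneg hp0 (by linarith) S

section UpperBound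

variable {n : ℕ} {a : Fin n → ℝ} {m t ε : ℝ}

lemma cubePr_le_mul_of_forall_le_sum_flipOn {P R : (Fin n → Bool) → Prop}
    {μ : Finset (Fin n) → ℝ} {C : ℝ} (hμ0 : ∀ S, 0 ≤ μ S) (hμ1 : ∑ S, μ S = 1) (hC : 0 ≤ C)
    (h : ∀ x, P x → 1 ≤ C * ∑ S with R (flipOn S x), μ S) :
    cubePr n P ≤ C * cubePr n R := by
  have hmarkov : 1 * cubePr n P ≤ cubeE n (fun x => C * ∑ S with R (flipOn S x), μ S) :=
    mul_cubePr_le_cubeE (fun x => mul_nonneg hC (sum_nonneg fun S _ => hμ0 S)) h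
  have hmix : cubeE n (fun x => ∑ S with R (flipOn S x), μ S) = cubePr n R := by
    calc cubeE n (fun x => ∑ S with R (flipOn S x), μ S)
        = cubeE n (fun x => ∑ S, μ S * {x | R x}.indicator 1 (flipOn S x)) := by
          simp [sum_filter, Set.indicator_apply]
      _ = ∑ S, μ S * cubePr n R := by
          simp only [cubeE_sum, cubeE_const_mul, cubeE_comp_flipOn, ← cubePr_eq_cubeE_indicator]
      _ = cubePr n R := by rw [← sum_mul, hμ1, one_mul]
  rwa [one_mul, cubeE_const_mul, hmix] at hmarkov

/-- Flipping each coordinate independently with probability `64m²` moves `l(x)` by a random amount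
whose mean is `O(m)` and whose variance is of order `m²`. -/
lemma one_le_exp_mul_sum_bernoulliWeight_flipOn (ha : ∑ i, a i ^ 2 = 1) (hm : ∀ i, |a i| ≤ m)
    (hm0 : 0 < m) (hm1 : m ≤ 1 / 64) {x : Fin n → Bool} (hlow : -(3 * m) ≤ lin n a x)
    (hup : m * lin n a x ≤ 1 / 64) :
    1 ≤ Real.exp 65 *
      ∑ S with lin n a x + 2 * m < lin n a (flipOn S x), bernoulliWeight (64 * m ^ 2) S := by
  let c i := -(a i * sgn1 (x i)) / (2 * m)
  have h2m : 0 < 2 * m := by positivity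
  have hp : 64 * m ^ 2 ≤ 1 / 64 := by nlinarith
  have hc : ∀ i, |c i| ≤ 1 / 2 := fun i => by
    rw [abs_div, abs_neg, abs_mul_sgn1, abs_of_pos h2m, div_le_iff₀ h2m]
    linarith [hm i]
  have hsum : ∑ i, c i = -lin n a x / (2 * m) := by
    simp only [c, ← sum_div, sum_neg_distrib, lin]
  have hsum_sq : ∑ i, c i ^ 2 = 1 / (4 * m ^ 2) := by
    simp only [c, div_pow, neg_sq, mul_sgn1_sq, ← sum_div, ha]
    ring
  have hfirst : 64 * m ^ 2 * (∑ i, c i + (∑ i, c i ^ 2) / 8) = 2 - 32 * (m * lin n a x) := by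
    rw [hsum, hsum_sq]
    field_simp
    ring
  have hsecond : 64 * m ^ 2 * (2 * ∑ i, c i + 4 * ∑ i, c i ^ 2) = 64 - 64 * (m * lin n a x) := by
    rw [hsum, hsum_sq]
    field_simp
    ring
  have hjump : ∀ S, 1 / 2 < ∑ i ∈ S, c i ↔ lin n a x + 2 * m < lin n a (flipOn S x) := fun S => by
    rw [← sum_div, sum_neg_distrib, lt_div_iff₀ h2m, lin_flipOn]
    constructor <;> intro h <;> linarith
  simp only [← hjump]
  exact one_le_exp_mul_sum_bernoulliWeight hc (by positivity) hp (by linarith)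
    (by rw [hsecond]; nlinarith)

lemma cubePr_sub_lt_lin_le (ha : ∑ i, a i ^ 2 = 1) (hm : ∀ i, |a i| ≤ m) (hm0 : 0 < m)
    (hm1 : m ≤ 1 / 64) (hmt : m * t ≤ 1 / 64) (ht : -m ≤ t) :
    cubePr n (fun x => t - 2 * m < lin n a x) ≤
      (1 + Real.exp 65) * cubePr n (fun x => t < lin n a x) := by
  have hweight : ∀ S : Finset (Fin n), 0 ≤ bernoulliWeight (64 * m ^ 2) S :=
    bernoulliWeight_nonneg (by positivity) (by nlinarith)
  have hjump : cubePr n (fun x => lin n a x ∈ Set.Ioc (t - 2 * m) t) ≤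
      Real.exp 65 * cubePr n (fun x => t < lin n a x) := by
    refine cubePr_le_mul_of_forall_le_sum_flipOn hweight (sum_bernoulliWeight _)
      (Real.exp_pos _).le fun x hx => ?_
    refine (one_le_exp_mul_sum_bernoulliWeight_flipOn ha hm hm0 hm1 (by linarith [hx.1])
      (by nlinarith [hx.2])).trans ?_
    gcongr with S
    · exact fun S _ _ => hweight S
    · linarith [hx.1]
  have hsplit : cubePr n (fun x => t - 2 * m < lin n a x) ≤
      cubePr n (fun x => lin n a x ∈ Set.Ioc (t - 2 * m) t) + cubePr n (fun x => t < lin n a x) :=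
    cubePr_le_add fun x hx => (le_or_gt (lin n a x) t).imp_left fun h => ⟨hx, h⟩
  linarith

lemma cubePr_lin_mem_Ioc_le_of_small (ha : ∑ i, a i ^ 2 = 1) (hm : ∀ i, |a i| ≤ m) (hm0 : 0 < m)
    (hm1 : m ≤ 1 / 64) (hmt : m * t ≤ 1 / 64) (ht : -m ≤ t) (hε0 : 0 < ε) (hε2 : ε ≤ 1 / 2)
    (hεT : ε ≤ cubePr n fun x => t < lin n a x) :
    cubePr n (fun x => lin n a x ∈ Set.Ioc t (t + 2 * m)) ≤
      12 * (1 + Real.exp 65) * cubePr n (fun x => t < lin n a x) *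
        (m * √(Real.log (1 / ε))) := by
  set T := cubePr n fun x => t < lin n a x
  have hsegment := sum_sq_mul_cubePr_lin_mem_Ioc_le (t := t) hm
  rw [ha, one_mul] at hsegment
  have hmean : cubeE n (fun x => ramp (t - 2 * m) (6 * m) (lin n a x)) ≤
      6 * m * ((1 + Real.exp 65) * T) := by
    refine (cubeE_le_mul_cubePr (P := fun x => t - 2 * m < lin n a x)
      (fun x _ => ramp_le (by positivity)) fun x hx => (ramp_of_le (not_lt.1 hx)).le).trans ?_
    gcongr
    exact cubePr_sub_lt_lin_le ha hm hm0 hm1 hmt ht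
  have hlevel := cubeE_mul_lin_le_sqrt_log ha (fun x => ramp_nonneg)
    (fun x => ramp_le (by positivity)) hmean hε0 hε2
    (hεT.trans (le_mul_of_one_le_left cubePr_nonneg (by linarith [Real.exp_pos 65])))
  have hsqrt : √(2 * Real.log (1 / ε)) ≤ 2 * √(Real.log (1 / ε)) := by
    rw [Real.sqrt_mul two_pos.le]
    gcongr
    exact Real.sqrt_le_iff.2 ⟨by norm_num, by norm_num⟩
  have hT : 0 ≤ T := cubePr_nonneg
  calc cubePr n (fun x => lin n a x ∈ Set.Ioc t (t + 2 * m))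
      ≤ 6 * m * ((1 + Real.exp 65) * T) * √(2 * Real.log (1 / ε)) := hsegment.trans hlevel
    _ ≤ 6 * m * ((1 + Real.exp 65) * T) * (2 * √(Real.log (1 / ε))) := by gcongr
    _ = 12 * (1 + Real.exp 65) * T * (m * √(Real.log (1 / ε))) := by ring

theorem cubePr_lin_mem_Ioc_le_mul_min (ha : ∑ i, a i ^ 2 = 1) (hm : ∀ i, |a i| ≤ m)
    (hε : ε = min (1 / 2) (cubePr n fun x => t < lin n a x)) (hε0 : 0 < ε) (ht : -m ≤ t) :
    cubePr n (fun x => lin n a x ∈ Set.Ioc t (t + 2 * m)) ≤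
      24 * (1 + Real.exp 65) * (ε * min 1 (m * √(Real.log (1 / ε)))) := by
  have hε2 : ε ≤ 1 / 2 := hε ▸ min_le_left _ _
  have hεT : ε ≤ cubePr n fun x => t < lin n a x := hε ▸ min_le_right _ _
  have hT : (cubePr n fun x => t < lin n a x) ≤ 2 * ε := by
    rcases le_total (1 / 2) (cubePr n fun x => t < lin n a x) with h | h
    · linarith [hε.trans (min_eq_left h), cubePr_le_one (P := fun x => t < lin n a x)]
    · linarith [hε.trans (min_eq_right h)]
  have hm0 : 0 < m := by
    obtain ⟨i, -, hi0, -⟩ := exists_forall_abs_le_abs ha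
    exact hi0.trans_le (hm i)
  have htq := le_two_mul_sqrt_log_of_le_cubePr ha hε0 hεT
  have hq : 1 / 2 ≤ √(Real.log (1 / ε)) :=
    Real.le_sqrt_of_sq_le (by linarith [half_le_log_one_div hε0 hε2])
  set q := √(Real.log (1 / ε))
  rcases le_or_gt (m * q) (1 / 128) with hsmall | hlarge
  · rw [min_eq_right (by linarith)]
    have hbound := cubePr_lin_mem_Ioc_le_of_small ha hm hm0 (by nlinarith) (by nlinarith) ht
      hε0 hε2 hεT
    refine hbound.trans ?_
    calc 12 * (1 + Real.exp 65) * cubePr n (fun x => t < lin n a x) * (m * q)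
        ≤ 12 * (1 + Real.exp 65) * (2 * ε) * (m * q) := by gcongr
      _ = 24 * (1 + Real.exp 65) * (ε * (m * q)) := by ring
  · have hmin : 1 / 128 ≤ min 1 (m * q) := le_min (by norm_num) hlarge.le
    calc cubePr n (fun x => lin n a x ∈ Set.Ioc t (t + 2 * m))
        ≤ cubePr n (fun x => t < lin n a x) := cubePr_mono fun x hx => hx.1
      _ ≤ 24 * (1 + 65) * (ε * (1 / 128)) := by linarith
      _ ≤ 24 * (1 + Real.exp 65) * (ε * min 1 (m * q)) := by
          gcongr
          linarith [Real.add_one_le_exp 65]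

end UpperBound

/-- **Probability of a linear form landing in an interval.** For `l(x) = ∑ aᵢxᵢ`
with `∑ aᵢ² = 1`, `m ≥ maxᵢ |aᵢ|`, `t ≥ -m`, and `ε = min(1/2, Pr[l(x) > t]) > 0`:
`Pr[l(x) ∈ (t, t+2m]] = Θ(ε·min(1, m√(log(1/ε))))`. -/
theorem linear_form_in_segment :
    ∃ c₁ c₂ : ℝ, 0 < c₁ ∧ 0 < c₂ ∧
      ∀ (n : ℕ) (a : Fin n → ℝ) (m t ε : ℝ),
        (∑ i, (a i) ^ 2) = 1 → (∀ i, |a i| ≤ m) → -m ≤ t →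
        ε = min (1 / 2) (cubePr n (fun x => t < lin n a x)) → 0 < ε →
        c₁ * (ε * min 1 (m * Real.sqrt (Real.log (1 / ε)))) ≤
            cubePr n (fun x => lin n a x ∈ Set.Ioc t (t + 2 * m)) ∧
          cubePr n (fun x => lin n a x ∈ Set.Ioc t (t + 2 * m)) ≤
            c₂ * (ε * min 1 (m * Real.sqrt (Real.log (1 / ε)))) := by
  refine ⟨1 / 40, 24 * (1 + Real.exp 65), by norm_num, by positivity, ?_⟩
  intro n a m t ε ha hm ht hε hε0
  refine ⟨?_, cubePr_lin_mem_Ioc_le_mul_min ha hm hε hε0 ht⟩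
  linarith [mul_min_le_mul_cubePr_lin_mem_Ioc ha hm hε hε0 ht]

end
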